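/- Let α and β be LIF expressions such that β is io-disjoint, i.e., I^sem(β) ∩ O^sem(β) = ∅. Then for every interpretation D, ⟦α ; β⟧_D = cyl^r_{O^sem(β)}(⟦α⟧_D) ∩ cyl^l_{O^sem(α)}(⟦β⟧_D), where cyl^r and cyl^l denote the BRV cylindrification operations. -/

import Mathlib

/-- A binary relation on valuations (BRV). -/
abbrev BRV (V dom : Type*) := Set ((V → dom) × (V → dom))

namespace BRV

variable {V dom : Type*}

/-- `ν1` and `ν2` agree on the set `Y` of variables. -/
def AgreeOn (ν1 ν2 : V → dom) (Y : Set V) : Prop := ∀ y ∈ Y, ν1 y = ν2 y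

/-- Composition of BRVs. -/
def comp (A B : BRV V dom) : BRV V dom :=
  {p | ∃ ν3, (p.1, ν3) ∈ A ∧ (ν3, p.2) ∈ B}

/-- Left cylindrification. -/
def cyll (Z : Set V) (A : BRV V dom) : BRV V dom :=
  {p | ∃ ν1', (ν1', p.2) ∈ A ∧ AgreeOn ν1' p.1 Zᶜ}

/-- Right cylindrification. -/
def cylr (Z : Set V) (A : BRV V dom) : BRV V dom :=
  {p | ∃ ν2', (p.1, ν2') ∈ A ∧ AgreeOn ν2' p.2 Zᶜ}

/-- Left selection. -/
def sell (x y : V) (A : BRV V dom) : BRV V dom := {p ∈ A | p.1 x = p.1 y}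

/-- Right selection. -/
def selr (x y : V) (A : BRV V dom) : BRV V dom := {p ∈ A | p.2 x = p.2 y}

/-- Left-to-right selection. -/
def sellr (x y : V) (A : BRV V dom) : BRV V dom := {p ∈ A | p.1 x = p.2 y}


end BRV


/-- A global BRV: a function from interpretations to BRVs.
`I` is the type of interpretations. -/
abbrev GBRV (V dom I : Type*) := I → BRV V dom

/-- Semantic outputs of a global BRV. -/
def Osem {V dom I : Type*} (Q : GBRV V dom I) : Set V :=
  {x | ∃ (D : I) (p : (V → dom) × (V → dom)), p ∈ Q D ∧ p.1 x ≠ p.2 x}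

/-- `X` determines `Q` on `Y`. -/
def Determines {V dom I : Type*} (Q : GBRV V dom I) (X Y : Set V) : Prop :=
  ∀ (D : I), ∀ p ∈ Q D, ∀ ν1' : V → dom, BRV.AgreeOn ν1' p.1 X →
    ∃ ν2' : V → dom, BRV.AgreeOn ν2' p.2 Y ∧ (ν1', ν2') ∈ Q D

/-- Semantic inputs of a global BRV. -/
def Isem {V dom I : Type*} (Q : GBRV V dom I) : Set V :=
  {x | ¬ Determines Q ({x}ᶜ) (Osem Q)}

-- `ν` patched with the `X`-valuation `ν'` (the values of `ν'` outside `X` are irrelevant).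
open Classical in
noncomputable def patch {V dom : Type*} (ν ν' : V → dom) (X : Set V) : V → dom :=
  fun v => if v ∈ X then ν' v else ν v

/-- A global BRV is inertially cylindrified on `X`. -/
def InertCyl {V dom I : Type*} (Q : GBRV V dom I) (X : Set V) : Prop :=
  (∀ x ∈ X, x ∉ Osem Q) ∧
  ∀ (D : I), ∀ p ∈ Q D, ∀ ν' : V → dom,
    (patch p.1 ν' X, patch p.2 ν' X) ∈ Q D

/-- A module vocabulary: each module name has an arity and an input arity. -/
structure Vocab (Name : Type*) where
  ar : Name → ℕ
  iar : Name → ℕ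
  iar_le : ∀ M, iar M ≤ ar M

/-- LIF expressions over a module vocabulary. -/
inductive LIF (Name V : Type*) (voc : Vocab Name) : Type _ where
  | idE : LIF Name V voc
  | atom (M : Name) (xs ys : List V)
      (hx : xs.length = voc.iar M) (hy : ys.length = voc.ar M - voc.iar M) :
      LIF Name V voc
  | union (a b : LIF Name V voc) : LIF Name V voc
  | inter (a b : LIF Name V voc) : LIF Name V voc
  | diff  (a b : LIF Name V voc) : LIF Name V voc
  | comp  (a b : LIF Name V voc) : LIF Name V voc
  | cyll (Z : Finset V) (a : LIF Name V voc) : LIF Name V voc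
  | cylr (Z : Finset V) (a : LIF Name V voc) : LIF Name V voc
  | sellr (x y : V) (a : LIF Name V voc) : LIF Name V voc
  | sell (x y : V) (a : LIF Name V voc) : LIF Name V voc
  | selr (x y : V) (a : LIF Name V voc) : LIF Name V voc

/-- An interpretation assigns to each module name a relation over `dom`,
represented as a set of lists. -/
abbrev Interp (Name dom : Type*) := Name → Set (List dom)

namespace LIF

variable {Name V dom : Type*} {voc : Vocab Name}

/-- The semantics of a LIF expression under an interpretation. -/
def sem (D : Interp Name dom) : LIF Name V voc → BRV V dom
  | .idE => {p | p.1 = p.2}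
  | .atom M xs ys _ _ =>
      {p | (xs.map p.1 ++ ys.map p.2) ∈ D M ∧ BRV.AgreeOn p.1 p.2 {v | v ∈ ys}ᶜ}
  | .union a b => a.sem D ∪ b.sem D
  | .inter a b => a.sem D ∩ b.sem D
  | .diff a b  => a.sem D \ b.sem D
  | .comp a b  => BRV.comp (a.sem D) (b.sem D)
  | .cyll Z a  => BRV.cyll (↑Z) (a.sem D)
  | .cylr Z a  => BRV.cylr (↑Z) (a.sem D)
  | .sellr x y a => BRV.sellr x y (a.sem D)
  | .sell x y a  => BRV.sell x y (a.sem D)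
  | .selr x y a  => BRV.selr x y (a.sem D)

/-- The global BRV induced by a LIF expression. -/
def gsem (dom : Type*) (α : LIF Name V voc) : GBRV V dom (Interp Name dom) :=
  fun D => α.sem D

end LIF

/-!
Say that `β` is io-disjoint and that `(μ, ν) ∈ ⟦β⟧`. The sets determining `β` on its outputs are
closed under finite intersections, and each `{x}ᶜ` with `x` an output is one of them. Since a LIF
expression has only finitely many outputs, the complement of the set of outputs determines `β` on
its outputs: the values of `μ` on the outputs are irrelevant, and may be overwritten. As `μ` and `ν`
agree outside the outputs, a pair `(κ, μ') ∈ ⟦α⟧` such that `μ'` agrees with `ν` there satisfies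
`(μ', ν) ∈ ⟦β⟧`, so `μ'` is the intermediate valuation required by composition.
-/

open BRV Set

section GlobalBRV

variable {V dom I : Type*} {Q R : GBRV V dom I} {D : I} {ν₁ ν₂ : V → dom} {X Y Z S : Set V}

theorem eq_of_notMem_Osem {x : V} (h : (ν₁, ν₂) ∈ Q D) (hx : x ∉ Osem Q) : ν₁ x = ν₂ x :=
  not_not.mp fun hne => hx ⟨D, (ν₁, ν₂), h, hne⟩

theorem Osem_subset_of_agreeOn_compl (h : ∀ D, ∀ p ∈ Q D, AgreeOn p.1 p.2 Sᶜ) : Osem Q ⊆ S :=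
  fun x ⟨D, p, hp, hne⟩ => not_not.mp fun hx => hne (h D p hp x hx)

theorem Osem_mono (h : ∀ D, Q D ⊆ R D) : Osem Q ⊆ Osem R :=
  fun _ ⟨D, p, hp, hne⟩ => ⟨D, p, h D hp, hne⟩

theorem Osem_union_subset : Osem (fun D => Q D ∪ R D) ⊆ Osem Q ∪ Osem R := by
  rintro x ⟨D, p, hp | hp, hne⟩
  · exact .inl ⟨D, p, hp, hne⟩
  · exact .inr ⟨D, p, hp, hne⟩

theorem Osem_comp_subset : Osem (fun D => comp (Q D) (R D)) ⊆ Osem Q ∪ Osem R :=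
  Osem_subset_of_agreeOn_compl fun _ _ ⟨_, hQ, hR⟩ _ hx =>
    (eq_of_notMem_Osem hQ fun h => hx (.inl h)).trans (eq_of_notMem_Osem hR fun h => hx (.inr h))

theorem Osem_cyll_subset : Osem (fun D => cyll Z (Q D)) ⊆ Osem Q ∪ Z :=
  Osem_subset_of_agreeOn_compl fun _ _ ⟨_, hQ, hZ⟩ x hx =>
    (hZ x fun h => hx (.inr h)).symm.trans (eq_of_notMem_Osem hQ fun h => hx (.inl h))

theorem Osem_cylr_subset : Osem (fun D => cylr Z (Q D)) ⊆ Osem Q ∪ Z :=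
  Osem_subset_of_agreeOn_compl fun _ _ ⟨_, hQ, hZ⟩ x hx =>
    (eq_of_notMem_Osem hQ fun h => hx (.inl h)).trans (hZ x fun h => hx (.inr h))

theorem determines_univ : Determines Q univ Y := by
  intro D p hp ν hν
  obtain rfl : ν = p.1 := funext fun x => hν x (mem_univ x)
  exact ⟨p.2, fun _ _ => rfl, hp⟩

theorem Determines.inter (hX : Determines Q X Z) (hY : Determines Q Y Z) :
    Determines Q (X ∩ Y) Z := by
  classical
  intro D p hp ν hν
  -- Passing from `p.1` to `ν` through `X.piecewise p.1 ν` changes no value on `X`,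
  -- then none on `Y`.
  have hpX : AgreeOn (X.piecewise p.1 ν) p.1 X := fun x hx => piecewise_eq_of_mem X p.1 ν hx
  have hνY : AgreeOn ν (X.piecewise p.1 ν) Y := fun x hxY => by
    by_cases hxX : x ∈ X
    · rw [piecewise_eq_of_mem X p.1 ν hxX, hν x ⟨hxX, hxY⟩]
    · rw [piecewise_eq_of_notMem X p.1 ν hxX]
  obtain ⟨μ, hμ, hμQ⟩ := hX D p hp _ hpX
  obtain ⟨μ', hμ', hμQ'⟩ := hY D _ hμQ ν hνY
  exact ⟨μ', fun z hz => (hμ' z hz).trans (hμ z hz), hμQ'⟩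

theorem determines_biInter {ι : Type*} {s : Set ι} (hs : s.Finite) {X : ι → Set V}
    (h : ∀ i ∈ s, Determines Q (X i) Y) : Determines Q (⋂ i ∈ s, X i) Y := by
  induction s, hs using Set.Finite.induction_on with
  | empty => simpa only [biInter_empty] using determines_univ
  | insert _ _ ih =>
    rw [biInter_insert]
    exact (h _ (mem_insert _ _)).inter (ih fun i hi => h i (mem_insert_of_mem _ hi))

theorem determines_compl_of_disjoint_Isem (hS : S.Finite) (h : Disjoint (Isem Q) S) :
    Determines Q Sᶜ (Osem Q) := by
  have hcompl : Sᶜ = ⋂ x ∈ S, {x}ᶜ := by simp only [← compl_iUnion, biUnion_of_singleton]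
  rw [hcompl]
  exact determines_biInter hS fun x hx => not_not.mp (h.notMem_of_mem_right hx)

theorem Determines.mem_of_agreeOn_compl_Osem (hQ : Determines Q (Osem Q)ᶜ (Osem Q))
    (h : (ν₁, ν₂) ∈ Q D) {ν : V → dom} (hν : AgreeOn ν ν₂ (Osem Q)ᶜ) : (ν, ν₂) ∈ Q D := by
  have hν₁ : AgreeOn ν ν₁ (Osem Q)ᶜ := fun x hx =>
    (hν x hx).trans (eq_of_notMem_Osem h hx).symm
  obtain ⟨μ, hμ, hμQ⟩ := hQ D _ h ν hν₁
  obtain rfl : μ = ν₂ := by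
    funext x
    by_cases hx : x ∈ Osem Q
    · exact hμ x hx
    · exact (eq_of_notMem_Osem hμQ hx).symm.trans (hν x hx)
  exact hμQ

theorem comp_subset_cylr_inter_cyll :
    comp (Q D) (R D) ⊆ cylr (Osem R) (Q D) ∩ cyll (Osem Q) (R D) :=
  fun _ ⟨ν, hQ, hR⟩ =>
    ⟨⟨ν, hQ, fun _ hx => eq_of_notMem_Osem hR hx⟩,
      ⟨ν, hR, fun _ hx => (eq_of_notMem_Osem hQ hx).symm⟩⟩

theorem Determines.cylr_inter_cyll_subset_comp (hQ : Determines Q (Osem Q)ᶜ (Osem Q))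
    (A : BRV V dom) : cylr (Osem Q) A ∩ cyll Z (Q D) ⊆ comp A (Q D) :=
  fun _ ⟨⟨ν, hA, hν⟩, ⟨_, hμ, _⟩⟩ => ⟨ν, hA, hQ.mem_of_agreeOn_compl_Osem hμ hν⟩

end GlobalBRV

theorem stmt13_general {V dom I : Type*} (Q R : GBRV V dom I) (hfin : (Osem R).Finite)
    (hio : Disjoint (Isem R) (Osem R)) (D : I) :
    comp (Q D) (R D) = cylr (Osem R) (Q D) ∩ cyll (Osem Q) (R D) :=
  comp_subset_cylr_inter_cyll.antisymm
    ((determines_compl_of_disjoint_Isem hfin hio).cylr_inter_cyll_subset_comp (Q D))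

theorem LIF.finite_Osem_gsem {Name V : Type*} {voc : Vocab Name} (dom : Type*)
    (α : LIF Name V voc) : (Osem (gsem dom α)).Finite := by
  induction α with
  | idE =>
    exact finite_empty.subset (Osem_subset_of_agreeOn_compl fun _ _ hp x _ => congrFun hp x)
  | atom _ _ ys =>
    exact ys.finite_toSet.subset (Osem_subset_of_agreeOn_compl fun _ _ hp => hp.2)
  | union _ _ iha ihb => exact (iha.union ihb).subset Osem_union_subset
  | comp _ _ iha ihb => exact (iha.union ihb).subset Osem_comp_subset
  | cyll Z _ ih => exact (ih.union Z.finite_toSet).subset Osem_cyll_subset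
  | cylr Z _ ih => exact (ih.union Z.finite_toSet).subset Osem_cylr_subset
  | inter _ _ ih | diff _ _ ih => exact ih.subset (Osem_mono fun _ _ hp => hp.1)
  | sellr _ _ _ ih | sell _ _ _ ih | selr _ _ _ ih =>
    exact ih.subset (Osem_mono fun _ _ hp => hp.1)

theorem stmt13 {Name V : Type*} [Nonempty Name] {voc : Vocab Name}
    (dom : Type*) [Countable dom] [Infinite dom]
    (α β : LIF Name V voc)
    (hio : Isem (LIF.gsem dom β) ∩ Osem (LIF.gsem dom β) = ∅) :
    ∀ D : Interp Name dom,
      (LIF.comp α β).sem D =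
        BRV.cylr (Osem (LIF.gsem dom β)) (α.sem D) ∩
        BRV.cyll (Osem (LIF.gsem dom α)) (β.sem D) :=
  stmt13_general (LIF.gsem dom α) (LIF.gsem dom β) (LIF.finite_Osem_gsem dom β)
    (disjoint_iff_inter_eq_empty.mpr hio)
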